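/- Let (𝒴, σ(𝒴)) be a measurable space, 𝒮(𝒴) ⊆ σ(𝒴), 𝒳 a set, and ℋ ⊆ 𝒴^𝒳 nonempty. Fix γ ∈ (0,1] and suppose d ≥ 1 is such that ℋ does not γ-shatter any measure tree of depth d+1. Then for every T ∈ ℕ there exists a randomized online learner 𝒜 such that for every stream (x_1,S_1),…,(x_T,S_T) ∈ (𝒳 × 𝒮(𝒴))^T (not necessarily realizable), the expected regret satisfies Σ_{t=1}^T μ̂_t(𝒴 \ S_t) − inf_{h ∈ ℋ} Σ_{t=1}^T 1{h(x_t) ∉ S_t} ≤ d + γT + √(2 d T ln T). -/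

import Mathlib

/-!
The learner runs exponential weights over `T ^ d` experts. An expert is indexed by a set `L` of
rounds; it predicts optimally for the version space of the hypotheses consistent with the feedback
of the rounds in `L`, in the manner of Littlestone's standard optimal algorithm. A prediction is
*missed* by a feedback set that receives too little mass from it, so that an optimal prediction
lowers the depth of the trees shattered by the version space whenever it is missed.

Fix a comparator `h` and let `L` collect the rounds consistent with `h` whose feedback missed the
prediction based on the earlier rounds of `L`. The version space always contains `h`, so `L` has at
most `d` elements. A round outside `L` costs at most `γ` unless `h` errs there, so this expert loses
at most `d + γ T` more than `h`. Sets of at most `d` rounds are represented by functions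
`Fin d → Fin T`, padded with the last round, whose feedback no prediction depends on. Exponential
weights over these functions cost a further `√(2 T log (T ^ d))`.
-/

open MeasureTheory

/-- Restriction of a path of length `d` to its strict prefix before position `t`. -/
def pref {M : Type*} {d : ℕ} (y : Fin d → M) (t : Fin d) : Fin (t : ℕ) → M :=
  fun i => y ⟨(i : ℕ), i.isLt.trans t.isLt⟩

/-- Restriction of a path of length `d` to its prefix up to and including position `t`. -/
def prefS {M : Type*} {d : ℕ} (y : Fin d → M) (t : Fin d) : Fin ((t : ℕ) + 1) → M :=
  fun i => y ⟨(i : ℕ), lt_of_le_of_lt (Nat.lt_succ_iff.mp i.isLt) t.isLt⟩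

/-- `ℋ` shatters a Set Littlestone tree of depth `d` (with feedback sets from `𝒮`):
there are node labels `node t : 𝒴^t → 𝒳` and edge labels `edge t : 𝒴^{t+1} → 𝒮` such that
for every path `y ∈ 𝒴^d`, (a) `y t ∉ edge t (y_{≤ t})` for all `t`, and (b) some `h ∈ ℋ`
satisfies `h (node t (y_{< t})) ∈ edge t (y_{≤ t})` for all `t`. -/
def SLShatter {X Y : Type*} (𝒮 : Set (Set Y)) (H : Set (X → Y)) (d : ℕ) : Prop :=
  ∃ (node : ∀ t : Fin d, (Fin (t : ℕ) → Y) → X)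
    (edge : ∀ t : Fin d, (Fin ((t : ℕ) + 1) → Y) → Set Y),
    (∀ (t : Fin d) (ys : Fin ((t : ℕ) + 1) → Y), edge t ys ∈ 𝒮) ∧
    ∀ y : Fin d → Y,
      (∀ t : Fin d, y t ∉ edge t (prefS y t)) ∧
      ∃ h ∈ H, ∀ t : Fin d, h (node t (pref y t)) ∈ edge t (prefS y t)

/-- `ℋ` `γ`-shatters a measure tree of depth `d`: nodes are labeled along paths of
probability measures, and for every path `μ ∈ Π(𝒴)^d`, (a) `μ t (edge t (μ_{≤t})) ≤ 1 - γ`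
(strict inequality `< 1` when `γ = 0`), and (b) some `h ∈ ℋ` is consistent with the edges
along the path. -/
def MSShatter {X Y : Type*} [MeasurableSpace Y] (𝒮 : Set (Set Y)) (H : Set (X → Y))
    (γ : ℝ) (d : ℕ) : Prop :=
  ∃ (node : ∀ t : Fin d, (Fin (t : ℕ) → ProbabilityMeasure Y) → X)
    (edge : ∀ t : Fin d, (Fin ((t : ℕ) + 1) → ProbabilityMeasure Y) → Set Y),
    (∀ (t : Fin d) (ms : Fin ((t : ℕ) + 1) → ProbabilityMeasure Y), edge t ms ∈ 𝒮) ∧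
    ∀ μ : Fin d → ProbabilityMeasure Y,
      (∀ t : Fin d,
        if γ = 0 then (μ t).toMeasure (edge t (prefS μ t)) < 1
        else (μ t).toMeasure (edge t (prefS μ t)) ≤ 1 - ENNReal.ofReal γ) ∧
      ∃ h ∈ H, ∀ t : Fin d, h (node t (pref μ t)) ∈ edge t (prefS μ t)

/-- `ℋ` shatters a `p`-Set Littlestone tree of depth `d`: paths are sequences in `[p]`,
and for every path `q ∈ [p]^d`, (a) the `p` sets labeling the outgoing edges of each node
along the path have empty intersection, and (b) some `h ∈ ℋ` is consistent with the edges
along the path. -/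
def PSLShatter {X Y : Type*} (𝒮 : Set (Set Y)) (H : Set (X → Y)) (p d : ℕ) : Prop :=
  ∃ (node : ∀ t : Fin d, (Fin (t : ℕ) → Fin p) → X)
    (edge : ∀ t : Fin d, (Fin ((t : ℕ) + 1) → Fin p) → Set Y),
    (∀ (t : Fin d) (qs : Fin ((t : ℕ) + 1) → Fin p), edge t qs ∈ 𝒮) ∧
    ∀ q : Fin d → Fin p,
      (∀ t : Fin d, ⋂ i : Fin p, edge t (Fin.snoc (pref q t) i) = ∅) ∧
      ∃ h ∈ H, ∀ t : Fin d, h (node t (pref q t)) ∈ edge t (prefS q t)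

/-- The history (list of labeled examples) presented to an online learner before round `t`,
on the stream given by instances `x` and feedback sets `S`. -/
def hist {X Y : Type*} (x : ℕ → X) (S : ℕ → Set Y) (t : ℕ) : List (X × Set Y) :=
  (List.range t).map fun i => (x i, S i)

section Shattering

variable {X Y P : Type*} {miss : P → Set Y → Prop} {V : Set (X → Y)} {d : ℕ}

/-- `V` shatters a tree of depth `n` whose branches at a node are the predictions `p : P`, the edge
along `p` being labeled by a feedback set that misses `p`. This is the notion of a shattered measure
tree, for an arbitrary type of predictions and by recursion from the root. -/
def Shatters (miss : P → Set Y → Prop) : ℕ → Set (X → Y) → Prop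
  | 0, V => V.Nonempty
  | n + 1, V => ∃ x, ∀ p, ∃ S, miss p S ∧ Shatters miss n {h ∈ V | h x ∈ S}

-- The trees of the children are glued below a new root: the first entry of a path selects the
-- child, and the rest of the path is read in the child's tree.
theorem Shatters.exists_tree : ∀ {n : ℕ} {V : Set (X → Y)}, Shatters miss n V →
    ∃ (node : ∀ t : Fin n, (Fin (t : ℕ) → P) → X)
      (edge : ∀ t : Fin n, (Fin ((t : ℕ) + 1) → P) → Set Y),
      (∀ t ps, miss (ps (Fin.last t)) (edge t ps)) ∧
        ∀ p : Fin n → P, ∃ h ∈ V, ∀ t, h (node t (pref p t)) ∈ edge t (prefS p t)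
  | 0, _, ⟨h, hh⟩ => ⟨fun t => t.elim0, fun t => t.elim0, fun t => t.elim0,
      fun _ => ⟨h, hh, fun t => t.elim0⟩⟩
  | n + 1, V, ⟨x, hx⟩ => by
      choose S hmiss hsub using hx
      choose node edge hedge hpath using fun p => (hsub p).exists_tree
      refine ⟨Fin.cases (fun _ => x) fun t ps => node (ps ⟨0, t.1.succ_pos⟩) t (Fin.tail ps),
        Fin.cases (fun ps => S (ps 0)) fun t ps => edge (ps 0) t (Fin.tail ps),
        Fin.cases (fun ps => hmiss (ps 0)) fun t ps => hedge (ps 0) t (Fin.tail ps),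
        fun p => ?_⟩
      obtain ⟨h, ⟨hV, hroot⟩, hchild⟩ := hpath (p 0) (Fin.tail p)
      exact ⟨h, hV, Fin.cases hroot hchild⟩

theorem shatters_antitone [Nonempty P] : Antitone fun n => Shatters miss n V := by
  refine antitone_nat_of_succ_le fun n => ?_
  induction n generalizing V with
  | zero =>
    rintro ⟨x, hx⟩
    obtain ⟨S, -, h, hV, -⟩ := hx (Classical.arbitrary P)
    exact ⟨h, hV⟩
  | succ n ih =>
    rintro ⟨x, hx⟩
    exact ⟨x, fun p => (hx p).imp fun S hS => ⟨hS.1, ih hS.2⟩⟩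

/-- At the instance `x`, every feedback set missing the prediction `p` strictly lowers the depth of
the trees shattered by the version space `V`: these are the predictions of the standard optimal
algorithm. The depth is handled through its strict upper bounds, as it may be infinite. -/
def IsOptimal (miss : P → Set Y → Prop) (V : Set (X → Y)) (x : X) (p : P) : Prop :=
  ∀ k, ¬ Shatters miss (k + 1) V → ∀ S, miss p S → ¬ Shatters miss k {h ∈ V | h x ∈ S}

theorem exists_isOptimal [Nonempty P] (miss : P → Set Y → Prop) (V : Set (X → Y)) (x : X) :
    ∃ p, IsOptimal miss V x p := by
  classical
  by_cases hV : ∃ k, ¬ Shatters miss (k + 1) V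
  · have hmin : ¬ ∃ x, ∀ p, ∃ S, miss p S ∧ Shatters miss (Nat.find hV) {h ∈ V | h x ∈ S} :=
      Nat.find_spec hV
    push Not at hmin
    obtain ⟨p, hp⟩ := hmin x
    exact ⟨p, fun k hk S hS hshat =>
      hp S hS (shatters_antitone (Nat.find_min' hV hk) hshat)⟩
  · exact ⟨Classical.arbitrary P, fun k hk => absurd ⟨k, hk⟩ hV⟩

end Shattering

section VersionSpace

variable {X Y P : Type*} {miss : P → Set Y → Prop} {H : Set (X → Y)} {L L' : Set ℕ}
  {x : ℕ → X} {S : ℕ → Set Y} {d t T : ℕ}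

/-- The hypotheses of `H` consistent with those examples of the history `l` whose rounds lie
in `L`. -/
def versionSpace (H : Set (X → Y)) (L : Set ℕ) (l : List (X × Set Y)) : Set (X → Y) :=
  {h ∈ H | ∀ i ∈ L, ∀ e ∈ l[i]?, h e.1 ∈ e.2}

theorem versionSpace_hist :
    versionSpace H L (hist x S t) = {h ∈ H | ∀ i < t, i ∈ L → h (x i) ∈ S i} := by
  ext h
  simp only [versionSpace, hist, List.getElem?_map, Option.mem_def, Option.map_eq_some_iff,
    List.getElem?_eq_some_iff, List.length_range, List.getElem_range, Set.mem_ofPred_eq]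
  exact ⟨fun hh => ⟨hh.1, fun i hi hiL => hh.2 i hiL _ ⟨i, ⟨hi, rfl⟩, rfl⟩⟩, fun hh =>
    ⟨hh.1, by rintro i hiL _ ⟨_, ⟨hi, rfl⟩, rfl⟩; exact hh.2 _ hi hiL⟩⟩

theorem versionSpace_hist_congr (hL : ∀ i < t, i ∈ L ↔ i ∈ L') :
    versionSpace H L (hist x S t) = versionSpace H L' (hist x S t) := by
  simp only [versionSpace_hist]
  grind

theorem versionSpace_hist_succ_of_mem (ht : t ∈ L) :
    versionSpace H L (hist x S (t + 1)) =
      {h ∈ versionSpace H L (hist x S t) | h (x t) ∈ S t} := by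
  simp only [versionSpace_hist]
  grind

theorem versionSpace_hist_succ_of_notMem (ht : t ∉ L) :
    versionSpace H L (hist x S (t + 1)) = versionSpace H L (hist x S t) := by
  simp only [versionSpace_hist]
  grind

theorem exists_updateRounds {pred : Set (X → Y) → X → P}
    (hpred : ∀ V x, IsOptimal miss V x (pred V x)) (hH : ¬ Shatters miss (d + 1) H)
    {h : X → Y} (hh : h ∈ H) (x : ℕ → X) (S : ℕ → Set Y) (t : ℕ) :
    ∃ L : Finset ℕ, (∃ k, k + L.card = d ∧
        ¬ Shatters miss (k + 1) (versionSpace H L (hist x S t))) ∧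
      (∀ i ∈ L, i < t ∧ h (x i) ∈ S i) ∧
      ∀ i < t, h (x i) ∈ S i → miss (pred (versionSpace H L (hist x S i)) (x i)) (S i) → i ∈ L := by
  induction t with
  | zero => exact ⟨∅, ⟨d, by simpa [versionSpace_hist] using hH⟩, by simp, by simp⟩
  | succ t ih =>
    obtain ⟨L, ⟨k, hk, hshat⟩, hcons, hmissed⟩ := ih
    have htL : t ∉ L := fun ht => (hcons t ht).1.false
    by_cases hupd : h (x t) ∈ S t ∧ miss (pred (versionSpace H L (hist x S t)) (x t)) (S t)
    · have hcongr : ∀ i ≤ t, versionSpace H (insert t L : Finset ℕ) (hist x S i) =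
          versionSpace H L (hist x S i) := fun i hi =>
        versionSpace_hist_congr fun j hj => by simp [(hj.trans_le hi).ne]
      have hshat' := hpred _ _ k hshat _ hupd.2
      have hmem : h ∈ {g ∈ versionSpace H L (hist x S t) | g (x t) ∈ S t} := by
        rw [versionSpace_hist]
        exact ⟨⟨hh, fun i _ hi => (hcons i hi).2⟩, hupd.1⟩
      -- The updated version space contains `h`, hence shatters depth `0`.
      obtain ⟨k, rfl⟩ : ∃ k', k = k' + 1 :=
        Nat.exists_eq_succ_of_ne_zero (by rintro rfl; exact hshat' ⟨h, hmem⟩)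
      refine ⟨insert t L, ⟨k, by rw [Finset.card_insert_of_notMem htL]; omega, ?_⟩, ?_, ?_⟩
      · rwa [versionSpace_hist_succ_of_mem (by simp), hcongr t le_rfl]
      · grind
      · intro i hi hci hmi
        rw [hcongr i (Nat.lt_succ_iff.mp hi)] at hmi
        grind
    · refine ⟨L, ⟨k, hk, by rwa [versionSpace_hist_succ_of_notMem (by simpa using htL)]⟩, ?_, ?_⟩
      · grind
      · grind

theorem exists_fin_map_subset_range {α : Type*} (s : Finset α) (a : α) (hs : s.card ≤ d) :
    ∃ f : Fin d → α, (s : Set α) ⊆ Set.range f ∧ Set.range f ⊆ insert a (s : Set α) := by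
  refine ⟨fun i => s.toList.getD i a, fun b hb => ?_, ?_⟩
  · obtain ⟨i, hi, rfl⟩ := List.mem_iff_getElem.mp (Finset.mem_toList.mpr hb)
    exact ⟨⟨i, hi.trans_le (s.length_toList.trans_le hs)⟩, List.getD_eq_getElem _ _ hi⟩
  · rintro _ ⟨i, rfl⟩
    rcases lt_or_ge (i : ℕ) s.toList.length with hi | hi
    · refine Or.inr (Finset.mem_toList.mp ?_)
      simp only [List.getD_eq_getElem _ _ hi, List.getElem_mem]
    · exact Or.inl (List.getD_eq_default _ _ hi)

open scoped Classical in
theorem exists_fin_expert_card_miss_le {pred : Set (X → Y) → X → P}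
    (hpred : ∀ V x, IsOptimal miss V x (pred V x)) (hH : ¬ Shatters miss (d + 1) H)
    {h : X → Y} (hh : h ∈ H) (x : ℕ → X) (S : ℕ → Set Y) (hT : 0 < T) :
    ∃ f : Fin d → Fin T, ((Finset.range T).filter fun t => h (x t) ∈ S t ∧
      miss (pred (versionSpace H (Set.range fun j => (f j : ℕ)) (hist x S t)) (x t)) (S t)).card
        ≤ d := by
  obtain ⟨L, ⟨k, hk, -⟩, hcons, hmissed⟩ := exists_updateRounds hpred hH hh x S T
  obtain ⟨f, hLf, hfL⟩ := exists_fin_map_subset_range (d := d) L (T - 1) (by omega)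
  have hfT : ∀ j, f j < T := fun j => by
    have := hfL ⟨j, rfl⟩
    grind
  refine ⟨fun j => ⟨f j, hfT j⟩, (Finset.card_le_card fun t ht => ?_).trans
    ((Nat.le_add_left _ _).trans hk.le)⟩
  obtain ⟨htT, hct, hmt⟩ := Finset.mem_filter.mp ht
  rw [Finset.mem_range] at htT
  rw [versionSpace_hist_congr (L' := L) fun i hi => ?_] at hmt
  · exact hmissed t htT hct hmt
  · exact ⟨fun hi' => (hfL hi').resolve_left (by omega), fun hi' => hLf hi'⟩

end VersionSpace

section ExponentialWeights

variable {ι : Type*} [Fintype ι]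

theorem exp_neg_le_quadratic {y : ℝ} (hy : 0 ≤ y) : Real.exp (-y) ≤ 1 - y + y ^ 2 / 2 := by
  have hpos : 0 < 1 - y + y ^ 2 / 2 := by nlinarith [sq_nonneg (y - 1)]
  rw [Real.exp_neg, inv_le_comm₀ (Real.exp_pos y) hpos]
  refine le_trans ?_ (Real.quadratic_le_exp_of_nonneg hy)
  rw [inv_le_iff_one_le_mul₀ hpos]
  nlinarith [sq_nonneg (y ^ 2)]

theorem sum_mul_exp_neg_le {w a : ι → ℝ} (hw : w ∈ stdSimplex ℝ ι) (ha : ∀ i, a i ∈ Set.Icc 0 1)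
    {η : ℝ} (hη : 0 ≤ η) :
    ∑ i, w i * Real.exp (-(η * a i)) ≤ Real.exp (-(η * ∑ i, w i * a i) + η ^ 2 / 2) := by
  have hterm : ∀ i, Real.exp (-(η * a i)) ≤ 1 - η * a i + η ^ 2 / 2 := fun i => by
    have hle : η * a i ≤ η := mul_le_of_le_one_right hη (ha i).2
    have hnonneg : 0 ≤ η * a i := mul_nonneg hη (ha i).1
    linarith [exp_neg_le_quadratic hnonneg, pow_le_pow_left₀ hnonneg hle 2]
  calc ∑ i, w i * Real.exp (-(η * a i))
      ≤ ∑ i, w i * (1 - η * a i + η ^ 2 / 2) :=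
        Finset.sum_le_sum fun i _ => mul_le_mul_of_nonneg_left (hterm i) (hw.1 i)
    _ = ∑ i, (w i * (1 + η ^ 2 / 2) - η * (w i * a i)) :=
        Finset.sum_congr rfl fun i _ => by ring
    _ = -(η * ∑ i, w i * a i) + η ^ 2 / 2 + 1 := by
        rw [Finset.sum_sub_distrib, ← Finset.sum_mul, ← Finset.mul_sum, hw.2]
        ring
    _ ≤ Real.exp (-(η * ∑ i, w i * a i) + η ^ 2 / 2) := Real.add_one_le_exp _

/-- The weights proportional to `exp (-η c i)`, where `c i` is the cumulative loss of
expert `i`. -/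
noncomputable def expWeight (η : ℝ) (c : ι → ℝ) (i : ι) : ℝ :=
  Real.exp (-(η * c i)) / ∑ j, Real.exp (-(η * c j))

variable [Nonempty ι]

theorem sum_exp_pos (c : ι → ℝ) : 0 < ∑ i, Real.exp (c i) :=
  Finset.sum_pos (fun _ _ => Real.exp_pos _) Finset.univ_nonempty

theorem expWeight_mem_stdSimplex (η : ℝ) (c : ι → ℝ) : expWeight η c ∈ stdSimplex ℝ ι :=
  ⟨fun _ => div_nonneg (Real.exp_pos _).le (sum_exp_pos _).le, by
    simp only [expWeight, ← Finset.sum_div, div_self (sum_exp_pos _).ne']⟩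

variable {η : ℝ} {ℓ : ι → ℕ → ℝ}

theorem sum_exp_neg_add_le (hη : 0 ≤ η) (c : ι → ℝ) {a : ι → ℝ} (ha : ∀ i, a i ∈ Set.Icc 0 1) :
    ∑ i, Real.exp (-(η * (c i + a i))) ≤
      (∑ i, Real.exp (-(η * c i))) *
        Real.exp (-(η * ∑ i, expWeight η c i * a i) + η ^ 2 / 2) := by
  calc ∑ i, Real.exp (-(η * (c i + a i)))
      = (∑ i, Real.exp (-(η * c i))) * ∑ i, expWeight η c i * Real.exp (-(η * a i)) := by
        rw [Finset.mul_sum]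
        refine Finset.sum_congr rfl fun i _ => ?_
        rw [expWeight, ← mul_assoc, mul_div_cancel₀ _ (sum_exp_pos _).ne', ← Real.exp_add]
        ring_nf
    _ ≤ _ := mul_le_mul_of_nonneg_left
        (sum_mul_exp_neg_le (expWeight_mem_stdSimplex η c) ha hη) (sum_exp_pos _).le

theorem sum_exp_neg_cumLoss_le (hη : 0 ≤ η) (hℓ : ∀ i t, ℓ i t ∈ Set.Icc 0 1) (T : ℕ) :
    ∑ i, Real.exp (-(η * ∑ t ∈ Finset.range T, ℓ i t)) ≤
      Fintype.card ι * Real.exp (-(η * ∑ t ∈ Finset.range T,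
        ∑ i, expWeight η (fun j => ∑ s ∈ Finset.range t, ℓ j s) i * ℓ i t) + T * (η ^ 2 / 2)) := by
  induction T with
  | zero => simp
  | succ T ih =>
    simp only [Finset.sum_range_succ _ T]
    refine (sum_exp_neg_add_le hη _ fun i => hℓ i T).trans
      ((mul_le_mul_of_nonneg_right ih (Real.exp_pos _).le).trans_eq ?_)
    rw [mul_assoc, ← Real.exp_add]
    push_cast
    ring_nf

theorem sum_expWeight_loss_le (hη : 0 < η) (hℓ : ∀ i t, ℓ i t ∈ Set.Icc 0 1) (T : ℕ) (i : ι) :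
    ∑ t ∈ Finset.range T, ∑ j, expWeight η (fun k => ∑ s ∈ Finset.range t, ℓ k s) j * ℓ j t ≤
      ∑ t ∈ Finset.range T, ℓ i t + (Real.log (Fintype.card ι) / η + T * (η / 2)) := by
  have hcard : (Fintype.card ι : ℝ) ≠ 0 := by exact_mod_cast Fintype.card_ne_zero
  have hlog := Real.log_le_log (Real.exp_pos _) <|
    (Finset.single_le_sum (f := fun i => Real.exp (-(η * ∑ t ∈ Finset.range T, ℓ i t)))
      (fun _ _ => (Real.exp_pos _).le) (Finset.mem_univ i)).trans
      (sum_exp_neg_cumLoss_le hη.le hℓ T)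
  rw [Real.log_exp, Real.log_mul hcard (Real.exp_ne_zero _), Real.log_exp] at hlog
  refine le_of_mul_le_mul_left ?_ hη
  have hprice : η * (Real.log (Fintype.card ι) / η + T * (η / 2)) =
      Real.log (Fintype.card ι) + T * (η ^ 2 / 2) := by
    field_simp
  linarith

end ExponentialWeights

section Learner

variable {X Y ι : Type*} [MeasurableSpace Y]

/-- A randomized online learner: it maps a history of labeled examples and a new instance to a
distribution over labels. -/
abbrev Learner (X Y : Type*) [MeasurableSpace Y] : Type _ :=
  List (X × Set Y) → X → ProbabilityMeasure Y

/-- The probability that the label drawn by `A` in round `t` lies outside the feedback set. -/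
noncomputable def Learner.loss (A : Learner X Y) (x : ℕ → X) (S : ℕ → Set Y) (t : ℕ) : ℝ :=
  (A (hist x S t) (x t)).toMeasure.real (S t)ᶜ

theorem Learner.loss_mem_Icc (A : Learner X Y) (x : ℕ → X) (S : ℕ → Set Y) (t : ℕ) :
    A.loss x S t ∈ Set.Icc 0 1 :=
  ⟨measureReal_nonneg, measureReal_le_one⟩

/-- The cumulative loss of `A` as a function of the history, which is what a learner based on `A`
can observe. -/
noncomputable def Learner.cumLoss (A : Learner X Y) (l : List (X × Set Y)) : ℝ :=
  ∑ i : Fin l.length, (A (l.take i) l[i].1).toMeasure.real l[i].2ᶜ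

theorem Learner.cumLoss_hist (A : Learner X Y) (x : ℕ → X) (S : ℕ → Set Y) (t : ℕ) :
    A.cumLoss (hist x S t) = ∑ s ∈ Finset.range t, A.loss x S s := by
  have htake : ∀ s : Fin (hist x S t).length, (hist x S t).take s = hist x S s := fun s => by
    have hs : (s : ℕ) ≤ t := by simpa [hist] using s.2.le
    simp [hist, ← List.map_take, List.take_range, hs]
  have hget : ∀ s : Fin (hist x S t).length, (hist x S t)[s] = (x s, S s) := fun s => by
    rw [Fin.getElem_fin]
    simp [hist]
  have hlength : (hist x S t).length = t := by simp [hist]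
  calc A.cumLoss (hist x S t)
      = ∑ i : Fin (hist x S t).length, A.loss x S i :=
        Finset.sum_congr rfl fun i _ => by rw [htake, hget, loss]
    _ = ∑ s ∈ Finset.range t, A.loss x S s := by
        rw [Fin.sum_univ_eq_sum_range (A.loss x S), hlength]

theorem exists_measureReal_eq_sum [Fintype ι] {w : ι → ℝ} (hw : w ∈ stdSimplex ℝ ι)
    (μ : ι → ProbabilityMeasure Y) :
    ∃ ν : ProbabilityMeasure Y, ∀ s, ν.toMeasure.real s = ∑ i, w i * (μ i).toMeasure.real s := by
  have happly : ∀ s, (∑ i, ENNReal.ofReal (w i) • (μ i).toMeasure) s =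
      ∑ i, ENNReal.ofReal (w i) * (μ i).toMeasure s := fun s => by
    simp [Measure.finsetSum_apply]
  refine ⟨⟨∑ i, ENNReal.ofReal (w i) • (μ i).toMeasure, ⟨?_⟩⟩, fun s => ?_⟩
  · simp only [happly, measure_univ, mul_one]
    rw [← ENNReal.ofReal_sum_of_nonneg fun i _ => hw.1 i, hw.2, ENNReal.ofReal_one]
  · rw [ProbabilityMeasure.coe_mk, measureReal_def, happly, ENNReal.toReal_sum fun i _ =>
      ENNReal.mul_ne_top ENNReal.ofReal_ne_top (measure_ne_top _ _)]
    simp only [ENNReal.toReal_mul, ENNReal.toReal_ofReal (hw.1 _), measureReal_def]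

theorem exists_learner_loss_le [Fintype ι] [Nonempty ι] (E : ι → Learner X Y) {η : ℝ}
    (hη : 0 < η) :
    ∃ A : Learner X Y, ∀ x S (T : ℕ) i, ∑ t ∈ Finset.range T, A.loss x S t ≤
      ∑ t ∈ Finset.range T, (E i).loss x S t +
        (Real.log (Fintype.card ι) / η + T * (η / 2)) := by
  choose A hA using fun l x => exists_measureReal_eq_sum
    (expWeight_mem_stdSimplex η fun i => (E i).cumLoss l) fun i => E i l x
  have hloss : ∀ x S t, Learner.loss A x S t = ∑ i,
      expWeight η (fun j => ∑ s ∈ Finset.range t, (E j).loss x S s) i * (E i).loss x S t :=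
    fun x S t => by simp only [Learner.loss, hA, Learner.cumLoss_hist]
  refine ⟨A, fun x S T i => ?_⟩
  simp only [hloss]
  exact sum_expWeight_loss_le hη (fun i t => (E i).loss_mem_Icc x S t) T i

theorem exists_learner_loss_le_add_sqrt [Fintype ι] [Nonempty ι] (E : ι → Learner X Y) (T : ℕ) :
    ∃ A : Learner X Y, ∀ x S i, ∑ t ∈ Finset.range T, A.loss x S t ≤
      ∑ t ∈ Finset.range T, (E i).loss x S t +
        Real.sqrt (2 * T * Real.log (Fintype.card ι)) := by
  rcases subsingleton_or_nontrivial ι with hι | hι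
  · refine ⟨E (Classical.arbitrary ι), fun x S i => ?_⟩
    rw [Subsingleton.elim (Classical.arbitrary ι) i]
    exact le_add_of_nonneg_right (Real.sqrt_nonneg _)
  rcases T.eq_zero_or_pos with rfl | hT
  · exact ⟨E (Classical.arbitrary ι), by simp⟩
  have hlog : 0 < Real.log (Fintype.card ι) :=
    Real.log_pos (by exact_mod_cast Fintype.one_lt_card)
  have hT' : (0 : ℝ) < T := by exact_mod_cast hT
  set r := Real.sqrt (2 * T * Real.log (Fintype.card ι))
  have hr0 : 0 < r := Real.sqrt_pos.mpr (by positivity)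
  have hr2 : r ^ 2 = 2 * T * Real.log (Fintype.card ι) := Real.sq_sqrt (by positivity)
  obtain ⟨A, hA⟩ := exists_learner_loss_le E (div_pos hr0 hT')
  refine ⟨A, fun x S i => (hA x S T i).trans_eq ?_⟩
  congr 1
  field_simp
  linarith

end Learner

section MeasureTree

variable {X Y : Type*} [MeasurableSpace Y] {𝒮 : Set (Set Y)} {γ : ℝ} {T : ℕ}

/-- The feedback set `S` is admissible and receives so little mass from the prediction `μ` that it
may label an edge of a measure tree; as in `MSShatter`, this means mass less than one if `γ = 0`. -/
def MassMiss (𝒮 : Set (Set Y)) (γ : ℝ) (μ : ProbabilityMeasure Y) (S : Set Y) : Prop :=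
  S ∈ 𝒮 ∧ if γ = 0 then μ.toMeasure S < 1 else μ.toMeasure S ≤ 1 - ENNReal.ofReal γ

theorem Shatters.msShatter {V : Set (X → Y)} {n : ℕ} (hV : Shatters (MassMiss 𝒮 γ) n V) :
    MSShatter 𝒮 V γ n := by
  obtain ⟨node, edge, hmiss, hpath⟩ := hV.exists_tree
  exact ⟨node, edge, fun t ms => (hmiss t ms).1,
    fun μ => ⟨fun t => (hmiss t (prefS μ t)).2, hpath μ⟩⟩

theorem measureReal_compl_le_of_not_massMiss (hγ : 0 ≤ γ) {μ : ProbabilityMeasure Y} {S : Set Y}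
    (hS : S ∈ 𝒮) (hmeas : MeasurableSet S) (hmiss : ¬ MassMiss 𝒮 γ μ S) :
    μ.toMeasure.real Sᶜ ≤ γ := by
  have hle : 1 - ENNReal.ofReal γ ≤ μ.toMeasure S := by
    by_contra! hlt
    refine hmiss ⟨hS, ?_⟩
    split_ifs with h0
    · simpa [h0] using hlt
    · exact hlt.le
  rw [measureReal_def, prob_compl_eq_one_sub hmeas]
  exact ENNReal.toReal_le_of_le_ofReal hγ (tsub_le_iff_tsub_le.mp hle)

open scoped Classical in
theorem sum_loss_le (hγ : 0 ≤ γ) (h𝒮 : ∀ s ∈ 𝒮, MeasurableSet s) (A : Learner X Y)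
    (x : ℕ → X) {S : ℕ → Set Y} (hS : ∀ t < T, S t ∈ 𝒮) (h : X → Y) :
    ∑ t ∈ Finset.range T, A.loss x S t ≤
      ((Finset.range T).filter fun t =>
          h (x t) ∈ S t ∧ MassMiss 𝒮 γ (A (hist x S t) (x t)) (S t)).card +
        γ * T + ((Finset.range T).filter fun t => h (x t) ∉ S t).card := by
  calc ∑ t ∈ Finset.range T, A.loss x S t
      ≤ ∑ t ∈ Finset.range T,
          ((if h (x t) ∈ S t ∧ MassMiss 𝒮 γ (A (hist x S t) (x t)) (S t) then 1 else 0) + γ +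
            if h (x t) ∉ S t then 1 else 0) := by
        refine Finset.sum_le_sum fun t ht => ?_
        have hSt := hS t (Finset.mem_range.mp ht)
        have hone := (A.loss_mem_Icc x S t).2
        have hnotMiss := measureReal_compl_le_of_not_massMiss hγ
          (μ := A (hist x S t) (x t)) hSt (h𝒮 _ hSt)
        rw [← Learner.loss] at hnotMiss
        grind
    _ = _ := by
        rw [Finset.sum_add_distrib, Finset.sum_add_distrib, Finset.sum_boole, Finset.sum_boole,
          Finset.sum_const, Finset.card_range, nsmul_eq_mul, mul_comm (T : ℝ)]

end MeasureTree

open scoped Classical in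
theorem stmt7_general {X Y : Type*} [MeasurableSpace Y]
    (𝒮 : Set (Set Y)) (h𝒮 : ∀ s ∈ 𝒮, MeasurableSet s)
    (H : Set (X → Y)) (hH : H.Nonempty) (γ : ℝ) (hγ : 0 ≤ γ) (d : ℕ)
    (hshat : ¬ MSShatter 𝒮 H γ (d + 1)) (T : ℕ) :
    ∃ A : List (X × Set Y) → X → ProbabilityMeasure Y,
      ∀ (x : ℕ → X) (S : ℕ → Set Y),
        (∀ t < T, S t ∈ 𝒮) →
        ∀ h ∈ H,
          (∑ t ∈ Finset.range T, (A (hist x S t) (x t)).toMeasure ((S t)ᶜ)).toReal -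
              (((Finset.range T).filter fun t => h (x t) ∉ S t).card : ℝ) ≤
            d + γ * T + Real.sqrt (2 * d * T * Real.log T) := by
  obtain ⟨h₀, -⟩ := hH
  rcases T.eq_zero_or_pos with rfl | hT
  · exact ⟨fun _ x => diracProba (h₀ x), by simp⟩
  have : Nonempty (Fin T) := ⟨⟨0, hT⟩⟩
  choose pred hpred using fun (V : Set (X → Y)) (x : X) =>
    have : Nonempty (ProbabilityMeasure Y) := ⟨diracProba (h₀ x)⟩
    exists_isOptimal (MassMiss 𝒮 γ) V x
  let E (f : Fin d → Fin T) : Learner X Y := fun l x =>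
    pred (versionSpace H (Set.range fun j => (f j : ℕ)) l) x
  obtain ⟨A, hA⟩ := exists_learner_loss_le_add_sqrt E T
  refine ⟨A, fun x S hS h hh => ?_⟩
  obtain ⟨f, hf⟩ := exists_fin_expert_card_miss_le hpred (mt Shatters.msShatter hshat) hh x S hT
  have hexpert := sum_loss_le hγ h𝒮 (E f) x hS h
  have hcard : 2 * T * Real.log (Fintype.card (Fin d → Fin T)) = 2 * d * T * Real.log T := by
    simp only [Fintype.card_fun, Fintype.card_fin, Nat.cast_pow, Real.log_pow]
    ring
  have hloss : (∑ t ∈ Finset.range T, (A (hist x S t) (x t)).toMeasure ((S t)ᶜ)).toReal =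
      ∑ t ∈ Finset.range T, A.loss x S t := ENNReal.toReal_sum fun _ _ => measure_ne_top _ _
  rw [hloss, ← hcard]
  linarith [hA x S f, (Nat.cast_le (α := ℝ)).mpr hf]

open scoped Classical in
/-- If `ℋ` is nonempty, `γ ∈ (0,1]`, `d ≥ 1`, and `ℋ` does not `γ`-shatter
any measure tree of depth `d+1`, then for every horizon `T` there is a randomized online
learner whose expected regret on every stream (against every `h ∈ ℋ`, hence against the
best-in-hindsight hypothesis) is at most `d + γT + √(2dT ln T)`. -/
theorem stmt7 {X Y : Type*} [MeasurableSpace Y]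
    (𝒮 : Set (Set Y)) (h𝒮 : ∀ s ∈ 𝒮, MeasurableSet s)
    (H : Set (X → Y)) (hH : H.Nonempty)
    (γ : ℝ) (hγ0 : 0 < γ) (hγ1 : γ ≤ 1) (d : ℕ) (hd : 1 ≤ d)
    (hshat : ¬ MSShatter 𝒮 H γ (d + 1)) (T : ℕ) :
    ∃ A : List (X × Set Y) → X → ProbabilityMeasure Y,
      ∀ (x : ℕ → X) (S : ℕ → Set Y),
        (∀ t < T, S t ∈ 𝒮) →
        ∀ h ∈ H,
          (∑ t ∈ Finset.range T, (A (hist x S t) (x t)).toMeasure ((S t)ᶜ)).toReal -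
              (((Finset.range T).filter fun t => h (x t) ∉ S t).card : ℝ) ≤
            d + γ * T + Real.sqrt (2 * d * T * Real.log T) :=
  stmt7_general 𝒮 h𝒮 H hH γ hγ0.le d hshat T
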